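/- arXiv:1703.10441 — 2 statements merged into one kernel-verified Lean document; each statement's English description precedes it below -/
import Mathlib

section
/- For each ε ∈ {1, −1}, the polynomial X(X − 4)(X + 32) − ε = X³ + 28X² − 128X − ε is irreducible over ℚ; hence K = ℚ[X]/(X³ + 28X² − 128X − ε) is a number field of degree 3. Moreover, the image μ of X in K is an algebraic integer, and μ, μ − 4 and μ + 32 are all units in the ring of integers 𝒪_K (since μ(μ − 4)(μ + 32) = ε). -/
open Polynomial

/-!
Since `X(X − 4)(X + 32) − ε` is monic with integer coefficients, each of its roots in a
commutative ring is integral over `ℤ`. A rational root would therefore be an integer `n` with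
`n(n − 4)(n + 32) = ±1`, so `n` and `n − 4` would both be `±1`, which is impossible. A cubic
without rational roots is irreducible over `ℚ`, and the degree of `K` is the degree of the
polynomial. Finally, `μ(μ − 4)(μ + 32) = ε` with `ε² = 1` exhibits the inverse of each factor
as `ε` times the product of the other two, which is again integral.
-/

lemma isIntegral_of_cubic {R : Type*} [CommRing R] (ε : ℤ) (x : R)
    (hx : x * (x - 4) * (x + 32) = (ε : R)) : IsIntegral ℤ x := by
  refine ⟨X ^ 3 + 28 * X ^ 2 - 128 * X - C ε, ?_, ?_⟩
  · rw [← C_ofNat 28, ← C_ofNat 128]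
    monicity!
  · simp only [eval₂_sub, eval₂_add, eval₂_mul, eval₂_pow, eval₂_X, eval₂_C, eval₂_ofNat]
    rw [eq_intCast]
    linear_combination hx

lemma no_rational_root (ε : ℤ) (hε : ε = 1 ∨ ε = -1) (q : ℚ) :
    q * (q - 4) * (q + 32) ≠ (ε : ℚ) := by
  intro hq
  obtain ⟨n, rfl⟩ := IsIntegrallyClosed.isIntegral_iff.mp (isIntegral_of_cubic ε q hq)
  have hn : n * (n - 4) * (n + 32) = ε := by
    simp only [eq_intCast] at hq
    exact_mod_cast hq
  have hu : IsUnit (n * (n - 4) * (n + 32)) := by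
    rw [hn]
    exact Int.isUnit_iff.mpr hε
  have h1 := Int.isUnit_iff.mp (isUnit_of_mul_isUnit_left (isUnit_of_mul_isUnit_left hu))
  have h2 := Int.isUnit_iff.mp (isUnit_of_mul_isUnit_right (isUnit_of_mul_isUnit_left hu))
  omega

/-- For each `ε ∈ {1, −1}`, the polynomial
`X(X − 4)(X + 32) − ε = X³ + 28X² − 128X − ε` is irreducible over `ℚ`; hence
`K = ℚ[X]/(X³ + 28X² − 128X − ε)` is a number field of degree 3. Moreover, the image `μ`
of `X` in `K` is an algebraic integer, and `μ`, `μ − 4` and `μ + 32` are all units in the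
ring of integers `𝒪_K` (since `μ(μ − 4)(μ + 32) = ε`). -/
theorem cubic_units_E7A2 (ε : ℤ) (hε : ε = 1 ∨ ε = -1) :
    letI f : ℚ[X] := X ^ 3 + 28 * X ^ 2 - 128 * X - C (ε : ℚ)
    letI μ : AdjoinRoot f := AdjoinRoot.root f
    X * (X - 4) * (X + 32) - C (ε : ℚ) = f ∧
      Irreducible f ∧
      Module.finrank ℚ (AdjoinRoot f) = 3 ∧
      IsIntegral ℤ μ ∧
      μ * (μ - 4) * (μ + 32) = (ε : AdjoinRoot f) ∧
      (∃ ν : AdjoinRoot f, IsIntegral ℤ ν ∧ μ * ν = 1) ∧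
      (∃ ν : AdjoinRoot f, IsIntegral ℤ ν ∧ (μ - 4) * ν = 1) ∧
      (∃ ν : AdjoinRoot f, IsIntegral ℤ ν ∧ (μ + 32) * ν = 1) := by
  generalize hf : (X ^ 3 + 28 * X ^ 2 - 128 * X - C (ε : ℚ) : ℚ[X]) = f
  replace hf := hf.symm
  set μ : AdjoinRoot f := AdjoinRoot.root f
  have hdeg : f.natDegree = 3 := by
    rw [hf, ← C_ofNat 28, ← C_ofNat 128]
    compute_degree!
  have hf0 : f ≠ 0 := by
    intro h
    simp [h] at hdeg
  have hirr : Irreducible f := by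
    rw [irreducible_iff_roots_eq_zero_of_degree_le_three (by omega) (by omega)]
    refine Multiset.eq_zero_of_forall_notMem fun q hq => no_rational_root ε hε q ?_
    have hroot : f.eval q = 0 := (mem_roots hf0).mp hq
    simp only [hf, eval_sub, eval_add, eval_mul, eval_pow, eval_X, eval_C, eval_ofNat] at hroot
    linear_combination hroot
  have hμ : μ * (μ - 4) * (μ + 32) = (ε : AdjoinRoot f) := by
    have h : (X ^ 3 + 28 * X ^ 2 - 128 * X - C (ε : ℚ)).eval₂ (AdjoinRoot.of f) μ = 0 :=
      hf ▸ AdjoinRoot.eval₂_root f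
    simp only [eval₂_sub, eval₂_add, eval₂_mul, eval₂_pow, eval₂_X, eval₂_C, eval₂_ofNat]
      at h
    rw [map_intCast] at h
    linear_combination h
  have hint : IsIntegral ℤ μ := isIntegral_of_cubic ε μ hμ
  have hZ (n : ℤ) : IsIntegral ℤ (n : AdjoinRoot f) := isIntegral_algebraMap (x := n)
  have h4 : IsIntegral ℤ (μ - 4) := hint.sub (by exact_mod_cast hZ 4)
  have h32 : IsIntegral ℤ (μ + 32) := hint.add (by exact_mod_cast hZ 32)
  have hsq : (ε : AdjoinRoot f) * ε = 1 := by
    rcases hε with h | h <;> simp [h]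
  refine ⟨by rw [hf]; ring, hirr, ?_, hint, hμ,
    ⟨ε * ((μ - 4) * (μ + 32)), (hZ ε).mul (h4.mul h32), ?_⟩,
    ⟨ε * (μ * (μ + 32)), (hZ ε).mul (hint.mul h32), ?_⟩,
    ⟨ε * (μ * (μ - 4)), (hZ ε).mul (hint.mul h4), ?_⟩⟩
  · rw [(AdjoinRoot.powerBasis hf0).finrank, AdjoinRoot.powerBasis_dim, hdeg]
  all_goals linear_combination (ε : AdjoinRoot f) * hμ + hsq
end

section
/- For each ε ∈ {1, −1}, the polynomial X(X + 4)(X − 4)(X + 16) − ε = X⁴ + 16X³ − 16X² − 256X − ε is irreducible over ℚ; hence K = ℚ[X]/(X⁴ + 16X³ − 16X² − 256X − ε) is a number field of degree 4. Moreover, the image μ of X in K is an algebraic integer, and μ, μ + 4, μ − 4 and μ + 16 are all units in the ring of integers 𝒪_K (since μ(μ + 4)(μ − 4)(μ + 16) = ε). -/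
/-!
Irreducibility is a Pólya-style argument. The integral polynomial `quarticInt ε` takes the unit value `-ε`
at `0, 4, -4`, so a monic factor `g ∈ ℤ[X]` takes values `±1` there. Since these points are
congruent modulo `4`, so are the values of `g`, and as `1 ≢ -1 (mod 4)` they all agree. Of two
complementary factors one has degree at most `2`, and it is then constant, having the same value at
three points. Gauss's lemma transfers irreducibility to `ℚ[X]`.

The rest follows from `μ (μ + 4) (μ - 4) (μ + 16) = ε` and `ε² = 1`: the inverse of each factor is
`ε` times the product of the other three, hence an algebraic integer.
-/

open Polynomial

/-- The integral form of the quartic. -/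
noncomputable def quarticInt (ε : ℤ) : ℤ[X] :=
  X ^ 4 + 16 * X ^ 3 - 16 * X ^ 2 - 256 * X - C ε

lemma quarticInt_natDegree (ε : ℤ) : (quarticInt ε).natDegree = 4 := by
  unfold quarticInt
  compute_degree!

lemma quarticInt_monic (ε : ℤ) : (quarticInt ε).Monic := by
  unfold quarticInt
  monicity!

lemma quarticInt_map (ε : ℤ) : (quarticInt ε).map (algebraMap ℤ ℚ) =
    X ^ 4 + 16 * X ^ 3 - 16 * X ^ 2 - 256 * X - C (ε : ℚ) := by
  simp [quarticInt]

/-- Two points congruent modulo `4` at which an integral polynomial takes values `±1` have the same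
value. -/
lemma eval_eq_of_isUnit (g : ℤ[X]) {a b : ℤ} (hab : 4 ∣ a - b)
    (ha : IsUnit (g.eval a)) (hb : IsUnit (g.eval b)) : g.eval a = g.eval b := by
  have h : 4 ∣ g.eval a - g.eval b := hab.trans (sub_dvd_eval_sub a b g)
  rcases Int.isUnit_iff.1 ha with h1 | h1 <;> rcases Int.isUnit_iff.1 hb with h2 | h2 <;>
    rw [h1, h2] at h ⊢ <;> omega

lemma quarticInt_irreducible (ε : ℤ) (hε : IsUnit ε) : Irreducible (quarticInt ε) := by
  have hne : quarticInt ε ≠ 1 := by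
    intro h
    have := quarticInt_natDegree ε
    simp [h] at this
  refine ((quarticInt_monic ε).irreducible_iff_natDegree').2 ⟨hne, ?_⟩
  intro p g hp hg hpg hmem
  rw [quarticInt_natDegree, Finset.mem_Ioc] at hmem
  have hunit : ∀ a : ℤ, (quarticInt ε).eval a = -ε → IsUnit (g.eval a) := by
    intro a ha
    rw [← hpg, eval_mul] at ha
    exact isUnit_of_mul_isUnit_right (ha ▸ hε.neg)
  have h0 : IsUnit (g.eval 0) := hunit 0 (by simp [quarticInt])
  have h4 : IsUnit (g.eval 4) := hunit 4 (by simp [quarticInt])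
  have hneg4 : IsUnit (g.eval (-4)) := hunit (-4) (by simp [quarticInt])
  have e1 := eval_eq_of_isUnit g (by norm_num) h4 h0
  have e2 := eval_eq_of_isUnit g (by norm_num) hneg4 h0
  have hconst : g = C (g.eval 0) := by
    refine eq_of_natDegree_lt_card_of_eval_eq' g _ {0, 4, -4} ?_ ?_
    · simp [e1, e2]
    · have : ({0, 4, -4} : Finset ℤ).card = 3 := by decide
      rw [this, natDegree_C]
      omega
  have := natDegree_C (g.eval 0)
  rw [← hconst] at this
  omega

/-- For each `ε ∈ {1, −1}`, the polynomial
`X(X + 4)(X − 4)(X + 16) − ε = X⁴ + 16X³ − 16X² − 256X − ε` is irreducible over `ℚ`;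
hence `K = ℚ[X]/(X⁴ + 16X³ − 16X² − 256X − ε)` is a number field of degree 4. Moreover,
the image `μ` of `X` in `K` is an algebraic integer, and `μ`, `μ + 4`, `μ − 4` and
`μ + 16` are all units in the ring of integers `𝒪_K` (since
`μ(μ + 4)(μ − 4)(μ + 16) = ε`). -/
theorem quartic_units_E6A3_A9 (ε : ℤ) (hε : ε = 1 ∨ ε = -1) :
    letI f : ℚ[X] := X ^ 4 + 16 * X ^ 3 - 16 * X ^ 2 - 256 * X - C (ε : ℚ)
    letI μ : AdjoinRoot f := AdjoinRoot.root f
    X * (X + 4) * (X - 4) * (X + 16) - C (ε : ℚ) = f ∧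
      Irreducible f ∧
      Module.finrank ℚ (AdjoinRoot f) = 4 ∧
      IsIntegral ℤ μ ∧
      μ * (μ + 4) * (μ - 4) * (μ + 16) = (ε : AdjoinRoot f) ∧
      (∃ ν : AdjoinRoot f, IsIntegral ℤ ν ∧ μ * ν = 1) ∧
      (∃ ν : AdjoinRoot f, IsIntegral ℤ ν ∧ (μ + 4) * ν = 1) ∧
      (∃ ν : AdjoinRoot f, IsIntegral ℤ ν ∧ (μ - 4) * ν = 1) ∧
      (∃ ν : AdjoinRoot f, IsIntegral ℤ ν ∧ (μ + 16) * ν = 1) := by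
  generalize hf : (X ^ 4 + 16 * X ^ 3 - 16 * X ^ 2 - 256 * X - C (ε : ℚ) : ℚ[X]) = f
  generalize hμ : AdjoinRoot.root f = μ
  have hunit : IsUnit ε := Int.isUnit_iff.2 hε
  have hmap : (quarticInt ε).map (algebraMap ℤ ℚ) = f := (quarticInt_map ε).trans hf
  have hdeg : f.natDegree = 4 := by
    rw [← hmap, (quarticInt_monic ε).natDegree_map, quarticInt_natDegree]
  have hfact : X * (X + 4) * (X - 4) * (X + 16) - C (ε : ℚ) = f := by
    rw [← hf]
    ring
  have hirr : Irreducible f := by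
    rw [← hmap]
    exact ((quarticInt_monic ε).irreducible_iff_irreducible_map_fraction_map).1
      (quarticInt_irreducible ε hunit)
  have hrank : Module.finrank ℚ (AdjoinRoot f) = 4 := by
    rw [(AdjoinRoot.powerBasis hirr.ne_zero).finrank, AdjoinRoot.powerBasis_dim, hdeg]
  have hprod : μ * (μ + 4) * (μ - 4) * (μ + 16) = (ε : AdjoinRoot f) := by
    have h := congrArg (AdjoinRoot.mk f) hfact
    rw [AdjoinRoot.mk_self] at h
    have h4 : AdjoinRoot.mk f 4 = 4 := map_ofNat _ 4
    have h16 : AdjoinRoot.mk f 16 = 16 := map_ofNat _ 16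
    simpa [sub_eq_zero, hμ, h4, h16] using h
  have hint : IsIntegral ℤ μ := by
    refine ⟨quarticInt ε, quarticInt_monic ε, ?_⟩
    simp only [quarticInt, eval₂_sub, eval₂_add, eval₂_mul, eval₂_pow, eval₂_X, eval₂_C,
      eval₂_ofNat]
    rw [eq_intCast (algebraMap ℤ (AdjoinRoot f)) ε]
    linear_combination hprod
  have hsq : (ε : AdjoinRoot f) * ε = 1 := by
    exact_mod_cast congrArg (Int.cast : ℤ → AdjoinRoot f) (Int.isUnit_mul_self hunit)
  have hi (n : ℤ) : IsIntegral ℤ (n : AdjoinRoot f) := isIntegral_algebraMap (R := ℤ) (x := n)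
  have hp4 : IsIntegral ℤ (μ + 4) := by simpa using hint.add (hi 4)
  have hm4 : IsIntegral ℤ (μ - 4) := by simpa using hint.sub (hi 4)
  have hp16 : IsIntegral ℤ (μ + 16) := by simpa using hint.add (hi 16)
  refine ⟨hfact, hirr, hrank, hint, hprod,
    ⟨ε * ((μ + 4) * (μ - 4) * (μ + 16)), (hi ε).mul ((hp4.mul hm4).mul hp16), ?_⟩,
    ⟨ε * (μ * (μ - 4) * (μ + 16)), (hi ε).mul ((hint.mul hm4).mul hp16), ?_⟩,
    ⟨ε * (μ * (μ + 4) * (μ + 16)), (hi ε).mul ((hint.mul hp4).mul hp16), ?_⟩,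
    ⟨ε * (μ * (μ + 4) * (μ - 4)), (hi ε).mul ((hint.mul hp4).mul hm4), ?_⟩⟩ <;>
  linear_combination (ε : AdjoinRoot f) * hprod + hsq
end
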